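/- Let σ > 0, N ≥ 1, and let F be a continuous nondecreasing solution of equation (E) with values in (m, M). Then lim_{x→∞} F(x) = M, lim_{x→−∞} F(x) = m, and F is strictly increasing. -/

import Mathlib

open MeasureTheory Filter Set

/-- Centered Gaussian density with variance `σ²`. -/
noncomputable def gq (σ z : ℝ) : ℝ :=
  Real.exp (-(z ^ 2) / (2 * σ ^ 2)) / (σ * Real.sqrt (2 * Real.pi))

/-- The averaged kernel `q̄(σ,x,z)`. -/
noncomputable def gqbar (σ x z : ℝ) : ℝ :=
  if x = 0 then gq σ z else (1 / x) * ∫ y in (0:ℝ)..x, gq σ (y - z)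

/-- `Φ⁺(y) = E[V·1_{V>y}]`. -/
noncomputable def Phip {Ω : Type*} [MeasurableSpace Ω] (P : Measure Ω) (V : Ω → ℝ) (y : ℝ) : ℝ :=
  ∫ ω in {ω | V ω > y}, V ω ∂P

/-- `Π⁺(y) = P(V > y)`. -/
noncomputable def Pip {Ω : Type*} [MeasurableSpace Ω] (P : Measure Ω) (V : Ω → ℝ) (y : ℝ) : ℝ :=
  (P {ω | V ω > y}).toReal

/-- `Φ⁻(y) = E[V·1_{V≤y}]`. -/
noncomputable def Phim {Ω : Type*} [MeasurableSpace Ω] (P : Measure Ω) (V : Ω → ℝ) (y : ℝ) : ℝ :=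
  ∫ ω in {ω | V ω ≤ y}, V ω ∂P

/-- `Π⁻(y) = P(V ≤ y)`. -/
noncomputable def Pim {Ω : Type*} [MeasurableSpace Ω] (P : Measure Ω) (V : Ω → ℝ) (y : ℝ) : ℝ :=
  (P {ω | V ω ≤ y}).toReal

/-- `Ψ⁺ = Φ⁺/Π⁺`. -/
noncomputable def Psip {Ω : Type*} [MeasurableSpace Ω] (P : Measure Ω) (V : Ω → ℝ) (y : ℝ) : ℝ :=
  Phip P V y / Pip P V y

/-- `Ψ⁻ = Φ⁻/Π⁻`. -/
noncomputable def Psim {Ω : Type*} [MeasurableSpace Ω] (P : Measure Ω) (V : Ω → ℝ) (y : ℝ) : ℝ :=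
  Phim P V y / Pim P V y

/-- `φ⁺_g`. -/
noncomputable def phip {Ω : Type*} [MeasurableSpace Ω] (P : Measure Ω) (V : Ω → ℝ)
    (σ : ℝ) (g : ℝ → ℝ) (x : ℝ) : ℝ :=
  (∫ z, Phip P V (g z) * gq σ (x - z)) / (∫ z, Pip P V (g z) * gq σ (x - z))

/-- `φ⁻_g`. -/
noncomputable def phim {Ω : Type*} [MeasurableSpace Ω] (P : Measure Ω) (V : Ω → ℝ)
    (σ : ℝ) (g : ℝ → ℝ) (x : ℝ) : ℝ :=
  (∫ z, Phim P V (g z) * gq σ (x - z)) / (∫ z, Pim P V (g z) * gq σ (x - z))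

/-- `φ_g`, equal to `φ⁺_g` on `[0,∞)` and `φ⁻_g` on `(−∞,0)`. -/
noncomputable def phig {Ω : Type*} [MeasurableSpace Ω] (P : Measure Ω) (V : Ω → ℝ)
    (σ : ℝ) (g : ℝ → ℝ) (x : ℝ) : ℝ :=
  if 0 ≤ x then phip P V σ g x else phim P V σ g x

/-- The interior of the support of the law of `V` is `(m, M)` (with `V` bounded). -/
def SuppIoo {Ω : Type*} [MeasurableSpace Ω] (P : Measure Ω) (V : Ω → ℝ) (m M : ℝ) : Prop :=
  m < M ∧ (∀ᵐ ω ∂P, V ω ∈ Set.Icc m M) ∧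
    (∀ y < M, 0 < P {ω | V ω > y}) ∧ (∀ y, m < y → 0 < P {ω | V ω ≤ y})

/-- Equation (E). -/
def SolvesE {Ω : Type*} [MeasurableSpace Ω] (P : Measure Ω) (V : Ω → ℝ)
    (σ : ℝ) (N : ℕ) (F : ℝ → ℝ) : Prop :=
  ∀ x : ℝ, F x =
    ∫ z, ((1 / (N:ℝ)) * gq σ (x - z) + (((N:ℝ) - 1) / (N:ℝ)) * gqbar σ x z) * phig P V σ F z

/-! Log-concavity of the kernel `q` says that its translates have monotone likelihood ratio, so
averaging a monotone function against `w z * q (x - z)` gives a monotone function of `x`. Together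
with `Ψ⁻ ≤ E[V] / P(Ω) ≤ Ψ⁺` this makes `φ_F` nondecreasing, hence convergent at `±∞`. By Fubini,
(E) reads `F x = α * h x + (1 - α) * ∫ t in 0..1, h (t * x)` with `h = φ_F ⋆ q`, so `F` has the
same limits.

If the limit `b` at `+∞` were below `M`, then `Π⁺ ∘ F` would stay away from `0`, so `φ_F` would
have the same limit as `Ψ⁺ ∘ F`; but `Ψ⁺ y - y` is bounded below by a positive constant for
`y ≤ b`, so that limit exceeds `b`. The argument at `-∞` is symmetric. Since `m ≠ M`, the function
`φ_F` is not constant, and convolving a nonconstant monotone function with a positive kernel gives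
a strictly increasing `h`, hence a strictly increasing `F`. -/

open scoped Topology ENNReal Convolution

section MonotoneLikelihoodRatio

/-- A probability density on `ℝ` that is positive and log-concave. Log-concavity is what makes the
translates of the density a family with monotone likelihood ratio. -/
structure IsLogConcaveDensity (q : ℝ → ℝ) : Prop where
  pos : ∀ z, 0 < q z
  integrable : Integrable q
  integral_eq_one : ∫ z, q z = 1
  concaveOn_log : ConcaveOn ℝ univ fun z => Real.log (q z)

lemma isLogConcaveDensity_gq {σ : ℝ} (hσ : 0 < σ) : IsLogConcaveDensity (gq σ) := by
  have gq_eq : gq σ = ProbabilityTheory.gaussianPDFReal 0 (Real.toNNReal (σ ^ 2)) := by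
    funext z
    have : √(2 * Real.pi * σ ^ 2) = σ * √(2 * Real.pi) := by
      rw [Real.sqrt_mul (by positivity), Real.sqrt_sq hσ.le, mul_comm]
    simp only [gq, ProbabilityTheory.gaussianPDFReal, Real.coe_toNNReal _ (sq_nonneg σ), sub_zero,
      this, div_eq_inv_mul]
  have log_gq (z : ℝ) :
      Real.log (gq σ z) = -((2 * σ ^ 2)⁻¹ * z ^ 2) + -Real.log (σ * √(2 * Real.pi)) := by
    rw [gq, Real.log_div (Real.exp_ne_zero _) (by positivity), Real.log_exp]
    ring
  have concave_sq : ConcaveOn ℝ univ fun z : ℝ => -((2 * σ ^ 2)⁻¹ * z ^ 2) :=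
    (even_two.convexOn_pow.smul (c := (2 * σ ^ 2)⁻¹) (by positivity)).neg
  refine ⟨fun z => by unfold gq; positivity, ?_, ?_, ?_⟩
  · exact gq_eq ▸ ProbabilityTheory.integrable_gaussianPDFReal _ _
  · exact gq_eq ▸ ProbabilityTheory.integral_gaussianPDFReal_eq_one _
      (Real.toNNReal_pos.2 (by positivity)).ne'
  · simp only [log_gq]
    exact concave_sq.add_const _

lemma concaveOn_add_le_add {s : Set ℝ} {f : ℝ → ℝ} (hf : ConcaveOn ℝ s f) {a b c d : ℝ}
    (ha : a ∈ s) (hd : d ∈ s) (hab : a ≤ b) (hac : a ≤ c) (h : a + d = b + c) :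
    f a + f d ≤ f b + f c := by
  rcases hac.eq_or_lt with rfl | hac
  · rw [add_left_cancel (h.trans (add_comm b a)), add_comm]
  have had : 0 < d - a := by linarith
  set r := (b - a) / (d - a)
  have hr0 : 0 ≤ r := div_nonneg (by linarith) had.le
  have hr1 : r ≤ 1 := (div_le_one had).2 (by linarith)
  have hrd : r * (d - a) = b - a := div_mul_cancel₀ _ had.ne'
  have hb := hf.2 ha hd (sub_nonneg.2 hr1) hr0 (sub_add_cancel 1 r)
  have hc := hf.2 ha hd hr0 (sub_nonneg.2 hr1) (add_sub_cancel r 1)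
  simp only [smul_eq_mul] at hb hc
  rw [show (1 - r) * a + r * d = b by linear_combination hrd] at hb
  rw [show r * a + (1 - r) * d = c by linear_combination h - hrd] at hc
  linarith

lemma IsLogConcaveDensity.mul_le_mul {q : ℝ → ℝ} (hq : IsLogConcaveDensity q) {x x' z z' : ℝ}
    (hx : x ≤ x') (hz : z ≤ z') : q (x' - z) * q (x - z') ≤ q (x - z) * q (x' - z') := by
  have hpos := hq.pos
  rw [← Real.log_le_log_iff (mul_pos (hpos _) (hpos _)) (mul_pos (hpos _) (hpos _)),
    Real.log_mul (hpos _).ne' (hpos _).ne', Real.log_mul (hpos _).ne' (hpos _).ne', add_comm]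
  exact concaveOn_add_le_add hq.concaveOn_log (mem_univ _) (mem_univ _)
    (by linarith) (by linarith) (by ring)

-- Chebyshev's argument: symmetrize over two independent copies of the variable.
lemma integral_mul_mul_integral_le {X : Type*} [MeasurableSpace X] [LinearOrder X] {μ : Measure X}
    [SFinite μ] {f a b : X → ℝ} (hf : Monotone f) (ha : Integrable a μ) (hb : Integrable b μ)
    (hfa : Integrable (fun z => f z * a z) μ) (hfb : Integrable (fun z => f z * b z) μ)
    (hab : ∀ z z', z ≤ z' → b z * a z' ≤ a z * b z') :
    (∫ z, f z * a z ∂μ) * ∫ z, b z ∂μ ≤ (∫ z, f z * b z ∂μ) * ∫ z, a z ∂μ := by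
  have nonneg : 0 ≤ ∫ p : X × X, (f p.2 - f p.1) * (a p.1 * b p.2 - b p.1 * a p.2) ∂μ.prod μ := by
    refine integral_nonneg fun ⟨z, z'⟩ => ?_
    rcases le_total z z' with h | h
    · exact mul_nonneg (sub_nonneg.2 (hf h)) (sub_nonneg.2 (hab z z' h))
    · refine mul_nonneg_of_nonpos_of_nonpos (sub_nonpos.2 (hf h)) ?_
      linarith [hab z' z h, mul_comm (a z) (b z'), mul_comm (b z) (a z')]
  have expand :
      ∫ p : X × X, (f p.2 - f p.1) * (a p.1 * b p.2 - b p.1 * a p.2) ∂μ.prod μ =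
        (∫ z, a z ∂μ) * (∫ z, f z * b z ∂μ) - (∫ z, b z ∂μ) * (∫ z, f z * a z ∂μ)
          - ((∫ z, f z * a z ∂μ) * (∫ z, b z ∂μ) - (∫ z, f z * b z ∂μ) * ∫ z, a z ∂μ) := by
    simp only [← integral_prod_mul]
    rw [← integral_sub (ha.mul_prod hfb) (hb.mul_prod hfa),
      ← integral_sub (hfa.mul_prod hb) (hfb.mul_prod ha)]
    refine Eq.trans ?_ (integral_sub ((ha.mul_prod hfb).sub (hb.mul_prod hfa))
      ((hfa.mul_prod hb).sub (hfb.mul_prod ha)))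
    congr 1 with p
    ring
  linarith

end MonotoneLikelihoodRatio

section Convolution

variable {f q : ℝ → ℝ} {m M c : ℝ} {l : Filter ℝ}

lemma memLp_top_of_mem_Icc {X : Type*} [MeasurableSpace X] {μ : Measure X} {f : X → ℝ}
    (hf : AEStronglyMeasurable f μ) (hfI : ∀ x, f x ∈ Icc m M) : MemLp f ∞ μ :=
  memLp_top_of_bound hf (max |m| |M|)
    (Eventually.of_forall fun x => abs_le_max_abs_abs (hfI x).1 (hfI x).2)

lemma integrable_mul_comp_sub_left (hf : MemLp f ∞) (hq : Integrable q) (x : ℝ) :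
    Integrable fun z => f z * q (x - z) :=
  (hq.comp_sub_left x).mul_of_top_right hf

lemma memLp_top_comp_sub_left (hf : MemLp f ∞) (x : ℝ) : MemLp (fun u => f (x - u)) ∞ :=
  hf.comp_measurePreserving (volume.measurePreserving_sub_left x)

lemma integrable_comp_sub_left_mul (hf : MemLp f ∞) (hq : Integrable q) (x : ℝ) :
    Integrable fun u => f (x - u) * q u :=
  hq.mul_of_top_right (memLp_top_comp_sub_left hf x)

lemma tendsto_convolution [l.IsCountablyGenerated] (hl : ∀ u : ℝ, Tendsto (fun x => x - u) l l)
    (hf : MemLp f ∞) (hq : Integrable q) (hc : Tendsto f l (𝓝 c)) :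
    Tendsto (f ⋆[.mul ℝ ℝ] q) l (𝓝 (c * ∫ u, q u)) := by
  rw [← integral_const_mul, show f ⋆[.mul ℝ ℝ] q = fun x => ∫ u, f (x - u) * q u from
    funext fun x => convolution_mul_swap]
  refine tendsto_integral_filter_of_dominated_convergence (fun u => lpNorm f ∞ volume * ‖q u‖)
    (Eventually.of_forall fun x => (integrable_comp_sub_left_mul hf hq x).aestronglyMeasurable)
    (Eventually.of_forall fun x => ?_) (hq.norm.const_mul _)
    (Eventually.of_forall fun u => (hc.comp (hl u)).mul_const _)
  filter_upwards [(volume.measurePreserving_sub_left x).quasiMeasurePreserving.ae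
    (ae_le_lpNorm_exponent_top hf)] with u hu
  rw [norm_mul]
  gcongr

lemma convolution_mem_Icc (hf : AEStronglyMeasurable f) (hfI : ∀ z, f z ∈ Icc m M)
    (hq0 : ∀ z, 0 ≤ q z) (hq1 : ∫ z, q z = 1) (x : ℝ) : (f ⋆[.mul ℝ ℝ] q) x ∈ Icc m M := by
  have hq : Integrable q := integrable_of_integral_eq_one hq1
  have hfq := integrable_mul_comp_sub_left (memLp_top_of_mem_Icc hf hfI) hq x
  have integral_const (c : ℝ) : ∫ z, c * q (x - z) = c := by
    rw [integral_const_mul, integral_sub_left_eq_self q volume x, hq1, mul_one]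
  rw [convolution_mul]
  constructor
  · rw [← integral_const m]
    exact integral_mono ((hq.comp_sub_left x).const_mul m) hfq
      fun z => mul_le_mul_of_nonneg_right (hfI z).1 (hq0 _)
  · rw [← integral_const M]
    exact integral_mono hfq ((hq.comp_sub_left x).const_mul M)
      fun z => mul_le_mul_of_nonneg_right (hfI z).2 (hq0 _)

lemma monotone_eq_of_ae_add_eq {d : ℝ} (hd : 0 < d) (hf : Monotone f)
    (hfd : ∀ᵐ z, f (z + d) = f z) (x y : ℝ) : f x = f y := by
  obtain ⟨z, hz⟩ : ∃ z, ∀ n : ℤ, f (z + n * d + d) = f (z + n * d) :=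
    (ae_all_iff.2 fun n : ℤ =>
      (measurePreserving_add_right volume (n * d)).quasiMeasurePreserving.ae hfd).exists
  have periodic : Function.Periodic (fun n : ℤ => f (z + n * d)) 1 := fun n => by
    simpa only [Int.cast_add, Int.cast_one, add_mul, one_mul, add_assoc] using hz n
  have const (n : ℤ) : f (z + n * d) = f z := by
    simpa using periodic.int_mul_eq n
  suffices ∀ x, f x = f z by rw [this x, this y]
  intro x
  refine le_antisymm ?_ ?_
  · rw [← const ⌈(x - z) / d⌉]
    exact hf (by linarith [(div_le_iff₀ hd).1 (Int.le_ceil ((x - z) / d))])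
  · rw [← const ⌊(x - z) / d⌋]
    exact hf (by linarith [(le_div_iff₀ hd).1 (Int.floor_le ((x - z) / d))])

lemma monotone_convolution (hf : Monotone f) (hfb : MemLp f ∞) (hq : Integrable q)
    (hq0 : ∀ z, 0 ≤ q z) : Monotone (f ⋆[.mul ℝ ℝ] q) := fun x y hxy => by
  rw [convolution_mul_swap, convolution_mul_swap]
  exact integral_mono (integrable_comp_sub_left_mul hfb hq x)
    (integrable_comp_sub_left_mul hfb hq y)
    fun u => mul_le_mul_of_nonneg_right (hf (sub_le_sub_right hxy u)) (hq0 u)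

lemma strictMono_convolution (hf : Monotone f) (hfb : MemLp f ∞) (hf_ne : ∃ x y, f x ≠ f y)
    (hq : Integrable q) (hq0 : ∀ z, 0 < q z) : StrictMono (f ⋆[.mul ℝ ℝ] q) := by
  intro x y hxy
  refine (monotone_convolution hf hfb hq (fun z => (hq0 z).le) hxy.le).lt_of_ne fun heq => ?_
  rw [convolution_mul_swap, convolution_mul_swap,
    integral_eq_iff_of_ae_le (integrable_comp_sub_left_mul hfb hq x)
      (integrable_comp_sub_left_mul hfb hq y) (Eventually.of_forall fun u =>
        mul_le_mul_of_nonneg_right (hf (sub_le_sub_right hxy.le u)) (hq0 u).le)] at heq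
  have hfd : ∀ᵐ z, f (z + (y - x)) = f z := by
    filter_upwards [(volume.measurePreserving_sub_left x).quasiMeasurePreserving.ae heq] with z hz
    have := mul_right_cancel₀ (hq0 _).ne' hz
    rw [sub_sub_cancel] at this
    rw [this]
    congr 1
    ring
  obtain ⟨a, b, hab⟩ := hf_ne
  exact hab (monotone_eq_of_ae_add_eq (sub_pos.2 hxy) hf hfd a b)

lemma strictMono_integral_comp_mul (hf : StrictMono f) :
    StrictMono fun x => ∫ t in (0 : ℝ)..1, f (t * x) := fun x y hxy => by
  have integrable (x : ℝ) : IntervalIntegrable (fun t => f (t * x)) volume 0 1 := by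
    rcases le_total 0 x with hx | hx
    · exact (hf.monotone.comp (monotone_mul_right_of_nonneg hx)).intervalIntegrable
    · exact (hf.monotone.comp_antitone (antitone_mul_right hx)).intervalIntegrable
  rw [← sub_pos, ← intervalIntegral.integral_sub (integrable y) (integrable x)]
  exact intervalIntegral.intervalIntegral_pos_of_pos_on ((integrable y).sub (integrable x))
    (fun t ht => sub_pos.2 (hf (mul_lt_mul_of_pos_left hxy ht.1))) one_pos

lemma tendsto_integral_comp_mul [l.IsCountablyGenerated]
    (hl : ∀ t : ℝ, 0 < t → Tendsto (fun x => t * x) l l) (hf : Measurable f)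
    (hfI : ∀ x, f x ∈ Icc m M) (hc : Tendsto f l (𝓝 c)) :
    Tendsto (fun x => ∫ t in (0 : ℝ)..1, f (t * x)) l (𝓝 c) := by
  rw [show c = ∫ _ in (0 : ℝ)..1, c by simp]
  refine intervalIntegral.tendsto_integral_filter_of_dominated_convergence (fun _ => max |m| |M|)
    (Eventually.of_forall fun x => (hf.comp (measurable_mul_const x)).aestronglyMeasurable)
    (Eventually.of_forall fun x => Eventually.of_forall fun t _ =>
      abs_le_max_abs_abs (hfI _).1 (hfI _).2) intervalIntegrable_const
    (Eventually.of_forall fun t ht => hc.comp (hl t ?_))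
  rw [uIoc_of_le zero_le_one] at ht
  exact ht.1

lemma integrable_prod_comp_mul_sub (hq : Integrable q) (ν : Measure ℝ) [IsFiniteMeasure ν]
    (x : ℝ) : Integrable (fun p : ℝ × ℝ => q (p.1 * x - p.2)) (ν.prod volume) := by
  have aesm : AEStronglyMeasurable (fun p : ℝ × ℝ => q (p.1 * x - p.2)) (ν.prod volume) :=
    hq.aestronglyMeasurable.comp_quasiMeasurePreserving <|
      QuasiMeasurePreserving.prod_of_right (by fun_prop) <| Eventually.of_forall fun t =>
        (volume.measurePreserving_sub_left (t * x)).quasiMeasurePreserving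
  refine (integrable_prod_iff aesm).2 ⟨Eventually.of_forall fun t => hq.comp_sub_left (t * x), ?_⟩
  simp only [integral_sub_left_eq_self (fun z => ‖q z‖) volume (_ * x)]
  exact integrable_const _

lemma integral_add_integral_comp_mul_sub_mul (hf : MemLp f ∞) (hq : Integrable q) (α β x : ℝ) :
    ∫ z, (α * q (x - z) + β * ∫ t in (0 : ℝ)..1, q (t * x - z)) * f z =
      α * (f ⋆[.mul ℝ ℝ] q) x + β * ∫ t in (0 : ℝ)..1, (f ⋆[.mul ℝ ℝ] q) (t * x) := by
  have joint : Integrable (fun p : ℝ × ℝ => f p.2 * q (p.1 * x - p.2))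
      ((volume.restrict (Ioc (0 : ℝ) 1)).prod volume) :=
    (integrable_prod_comp_mul_sub hq _ x).bdd_mul hf.1.comp_snd
      (Measure.quasiMeasurePreserving_snd.ae (ae_le_lpNorm_exponent_top hf))
  have inner (z : ℝ) : f z * ∫ t in (0 : ℝ)..1, q (t * x - z) =
      ∫ t in Ioc (0 : ℝ) 1, f z * q (t * x - z) := by
    rw [intervalIntegral.integral_of_le zero_le_one, integral_const_mul]
  have swap : ∫ z, f z * ∫ t in (0 : ℝ)..1, q (t * x - z) =
      ∫ t in (0 : ℝ)..1, (f ⋆[.mul ℝ ℝ] q) (t * x) := by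
    simp only [inner]
    rw [intervalIntegral.integral_of_le zero_le_one]
    exact (integral_integral_swap (f := fun t z => f z * q (t * x - z)) joint).symm
  have integrable_inner : Integrable fun z => f z * ∫ t in (0 : ℝ)..1, q (t * x - z) := by
    simpa only [inner] using joint.integral_prod_right
  rw [← swap, convolution_mul, ← integral_const_mul, ← integral_const_mul, ← integral_add
    ((integrable_mul_comp_sub_left hf hq x).const_mul α) (integrable_inner.const_mul β)]
  congr 1 with z
  ring

end Convolution

section KernelMean

/-- The average of `f` with weight `w z * q (x - z)`, as a function of `x`. With `w = Π± ∘ g`,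
`f = Ψ± ∘ g` and `q` Gaussian it is the `φ±_g` of the paper. -/
noncomputable def kernelMean (q w f : ℝ → ℝ) (x : ℝ) : ℝ :=
  ((fun z => f z * w z) ⋆[.mul ℝ ℝ] q) x / (w ⋆[.mul ℝ ℝ] q) x

variable {q w f : ℝ → ℝ} {m M c p : ℝ} {l : Filter ℝ}

lemma convolution_pos (hw : MemLp w ∞) (hw0 : ∀ z, 0 < w z) (hq : Integrable q)
    (hq0 : ∀ z, 0 < q z) (x : ℝ) : 0 < (w ⋆[.mul ℝ ℝ] q) x := by
  have pos (z : ℝ) : 0 < w z * q (x - z) := mul_pos (hw0 z) (hq0 _)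
  rw [convolution_mul, integral_pos_iff_support_of_nonneg (fun z => (pos z).le)
    (integrable_mul_comp_sub_left hw hq x), show (Function.support fun z => w z * q (x - z)) = univ
    from eq_univ_of_forall fun z => (pos z).ne']
  simp

lemma monotone_kernelMean (hq : IsLogConcaveDensity q) (hw : MemLp w ∞) (hw0 : ∀ z, 0 < w z)
    (hf : Monotone f) (hfb : MemLp f ∞) : Monotone (kernelMean q w f) := fun x x' hxx' => by
  have weight (y : ℝ) := integrable_mul_comp_sub_left hw hq.integrable y
  have weighted (y : ℝ) : Integrable fun z => f z * w z * q (y - z) :=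
    integrable_mul_comp_sub_left (hw.mul hfb) hq.integrable y
  rw [kernelMean, kernelMean, div_le_div_iff₀ (convolution_pos hw hw0 hq.integrable hq.pos x)
    (convolution_pos hw hw0 hq.integrable hq.pos x')]
  simp only [convolution_mul, mul_assoc] at weighted ⊢
  refine integral_mul_mul_integral_le hf (weight x) (weight x') (weighted x) (weighted x')
    fun z z' hz => ?_
  calc w z * q (x' - z) * (w z' * q (x - z'))
      = w z * w z' * (q (x' - z) * q (x - z')) := by ring
    _ ≤ w z * w z' * (q (x - z) * q (x' - z')) :=
        mul_le_mul_of_nonneg_left (hq.mul_le_mul hxx' hz) (mul_pos (hw0 z) (hw0 z')).le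
    _ = w z * q (x - z) * (w z' * q (x' - z')) := by ring

lemma kernelMean_mem_Icc (hq : Integrable q) (hq0 : ∀ z, 0 < q z) (hw : MemLp w ∞)
    (hw0 : ∀ z, 0 < w z) (hf : AEStronglyMeasurable f) (hfI : ∀ z, f z ∈ Icc m M) (x : ℝ) :
    kernelMean q w f x ∈ Icc m M := by
  have weight := integrable_mul_comp_sub_left hw hq x
  have weighted : Integrable fun z => f z * w z * q (x - z) :=
    integrable_mul_comp_sub_left (hw.mul (memLp_top_of_mem_Icc hf hfI)) hq x
  have pos (z : ℝ) : 0 ≤ w z * q (x - z) := (mul_pos (hw0 z) (hq0 _)).le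
  rw [kernelMean, mem_Icc, le_div_iff₀ (convolution_pos hw hw0 hq hq0 x),
    div_le_iff₀ (convolution_pos hw hw0 hq hq0 x)]
  simp only [convolution_mul, ← integral_const_mul, mul_assoc] at weighted ⊢
  exact ⟨integral_mono (weight.const_mul m) weighted
      fun z => mul_le_mul_of_nonneg_right (hfI z).1 (pos z),
    integral_mono weighted (weight.const_mul M)
      fun z => mul_le_mul_of_nonneg_right (hfI z).2 (pos z)⟩

lemma tendsto_kernelMean [l.IsCountablyGenerated] (hl : ∀ u : ℝ, Tendsto (fun x => x - u) l l)
    (hq : Integrable q) (hq_ne : ∫ z, q z ≠ 0) (hw : MemLp w ∞) (hf : MemLp f ∞)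
    (hp : p ≠ 0) (hwp : Tendsto w l (𝓝 p)) (hfc : Tendsto f l (𝓝 c)) :
    Tendsto (kernelMean q w f) l (𝓝 c) := by
  have h := (tendsto_convolution hl (hw.mul hf) hq (hfc.mul hwp)).div
    (tendsto_convolution hl hw hq hwp) (mul_ne_zero hp hq_ne)
  rwa [mul_assoc, mul_div_cancel_right₀ c (mul_ne_zero hp hq_ne)] at h

end KernelMean

section SetAverage

variable {X : Type*} [MeasurableSpace X] {μ : Measure X} {f : X → ℝ} {s t u : Set X} {c δ y : ℝ}

lemma setAverage_mem_Icc {a b : ℝ} (hs : μ s ≠ 0) (hs_top : μ s ≠ ∞) (hf : IntegrableOn f s μ)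
    (hfI : ∀ᵐ x ∂μ, f x ∈ Icc a b) : ⨍ x in s, f x ∂μ ∈ Icc a b :=
  (convex_Icc a b).set_average_mem isClosed_Icc hs hs_top (ae_restrict_of_ae hfI) hf

lemma le_setAverage (hs : NullMeasurableSet s μ) (hs0 : μ s ≠ 0) (hs_top : μ s ≠ ∞)
    (hf : IntegrableOn f s μ) (hfs : ∀ x ∈ s, c ≤ f x) : c ≤ ⨍ x in s, f x ∂μ :=
  (convex_Ici c).set_average_mem isClosed_Ici hs0 hs_top
    ((ae_restrict_iff'₀ hs).2 (Eventually.of_forall hfs)) hf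

lemma setAverage_le_setAverage_of_subset (hsu : s ⊆ u) (hs : NullMeasurableSet s μ)
    (hu : NullMeasurableSet u μ) (hs0 : μ s ≠ 0) (hu_top : μ u ≠ ∞) (hf : IntegrableOn f u μ)
    (hfs : ∀ x ∈ s, c ≤ f x) (hfu : ∀ x ∈ u \ s, f x ≤ c) :
    ⨍ x in u, f x ∂μ ≤ ⨍ x in s, f x ∂μ := by
  set A := ⨍ x in s, f x ∂μ
  have hs_top : μ s ≠ ∞ := measure_ne_top_of_subset hsu hu_top
  have hus_top : μ (u \ s) ≠ ∞ := measure_ne_top_of_subset sdiff_subset hu_top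
  have hcA : c ≤ A := le_setAverage hs hs0 hs_top (hf.mono_set hsu) hfs
  have integral_sdiff_le : ∫ x in u \ s, f x ∂μ ≤ ∫ _ in u \ s, A ∂μ :=
    setIntegral_mono_on₀ (hf.mono_set sdiff_subset) (integrableOn_const hus_top) (hu.diff hs)
      fun x hx => (hfu x hx).trans hcA
  have hμu : 0 < μ.real u :=
    ENNReal.toReal_pos (fun hu0 => hs0 (measure_mono_null hsu hu0)) hu_top
  rw [setAverage_eq, smul_eq_mul, inv_mul_le_iff₀ hμu]
  calc ∫ x in u, f x ∂μ
      = (∫ x in s, f x ∂μ) + ∫ x in u \ s, f x ∂μ := by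
        rw [← integral_inter_add_sdiff₀ hs hf, inter_eq_right.2 hsu]
    _ ≤ (∫ x in s, f x ∂μ) + ∫ _ in u \ s, A ∂μ := add_le_add_right integral_sdiff_le _
    _ = μ.real u * A := by
        rw [← measure_smul_setAverage f hs_top, setIntegral_const, ← add_smul,
          ← measureReal_inter_add_sdiff₀ hs hu_top, inter_eq_right.2 hsu, smul_eq_mul]

lemma add_mul_div_le_setAverage (hts : t ⊆ s) (hs : NullMeasurableSet s μ)
    (ht : NullMeasurableSet t μ) (hs0 : μ s ≠ 0) (hs_top : μ s ≠ ∞) (hf : IntegrableOn f s μ)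
    (hfs : ∀ x ∈ s, y ≤ f x) (hft : ∀ x ∈ t, y + δ ≤ f x) :
    y + δ * (μ.real t / μ.real s) ≤ ⨍ x in s, f x ∂μ := by
  have ht_top : μ t ≠ ∞ := measure_ne_top_of_subset hts hs_top
  have hst_top : μ (s \ t) ≠ ∞ := measure_ne_top_of_subset sdiff_subset hs_top
  have hμs : 0 < μ.real s := ENNReal.toReal_pos hs0 hs_top
  rw [setAverage_eq, smul_eq_mul, le_inv_mul_iff₀ hμs]
  calc μ.real s * (y + δ * (μ.real t / μ.real s))
      = (∫ _ in t, y + δ ∂μ) + ∫ _ in s \ t, y ∂μ := by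
        rw [setIntegral_const, setIntegral_const, smul_eq_mul, smul_eq_mul, mul_add,
          mul_left_comm, mul_div_cancel₀ _ hμs.ne', ← measureReal_inter_add_sdiff₀ ht hs_top,
          inter_eq_right.2 hts]
        ring
    _ ≤ (∫ x in t, f x ∂μ) + ∫ x in s \ t, f x ∂μ := by
        gcongr ?_ + ?_
        · exact setIntegral_mono_on₀ (integrableOn_const ht_top) (hf.mono_set hts) ht hft
        · exact setIntegral_mono_on₀ (integrableOn_const hst_top) (hf.mono_set sdiff_subset)
            (hs.diff ht) fun x hx => hfs x hx.1
    _ = ∫ x in s, f x ∂μ := by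
        rw [← integral_inter_add_sdiff₀ ht hf, inter_eq_right.2 hts]

end SetAverage
section TruncatedMean

variable {Ω : Type*} [MeasurableSpace Ω] {P : Measure Ω} {V : Ω → ℝ} {m M L y : ℝ}

lemma Psip_eq_setAverage : Psip P V y = ⨍ ω in {ω | V ω > y}, V ω ∂P := by
  rw [setAverage_eq, smul_eq_mul, ← div_eq_inv_mul]
  rfl

lemma Psim_eq_setAverage : Psim P V y = ⨍ ω in {ω | V ω ≤ y}, V ω ∂P := by
  rw [setAverage_eq, smul_eq_mul, ← div_eq_inv_mul]
  rfl

variable [IsFiniteMeasure P]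

lemma Psip_mul_Pip : Psip P V y * Pip P V y = Phip P V y := by
  rw [Psip_eq_setAverage, mul_comm]
  exact measure_smul_setAverage V (measure_ne_top P _)

lemma Psim_mul_Pim : Psim P V y * Pim P V y = Phim P V y := by
  rw [Psim_eq_setAverage, mul_comm]
  exact measure_smul_setAverage V (measure_ne_top P _)

lemma antitone_Pip : Antitone (Pip P V) :=
  fun _ _ h => measureReal_mono fun _ hω => h.trans_lt hω

lemma monotone_Pim : Monotone (Pim P V) :=
  fun _ _ h => measureReal_mono fun _ hω => le_trans hω h

lemma Pip_mem_Icc (y : ℝ) : Pip P V y ∈ Icc 0 (P.real univ) :=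
  ⟨measureReal_nonneg, measureReal_mono (subset_univ _)⟩

lemma Pim_mem_Icc (y : ℝ) : Pim P V y ∈ Icc 0 (P.real univ) :=
  ⟨measureReal_nonneg, measureReal_mono (subset_univ _)⟩

namespace SuppIoo

variable (h : SuppIoo P V m M) (hV : Integrable V P)
include h

lemma Pip_pos (hy : y < M) : 0 < Pip P V y :=
  ENNReal.toReal_pos (h.2.2.1 y hy).ne' (measure_ne_top P _)

lemma Pim_pos (hy : m < y) : 0 < Pim P V y :=
  ENNReal.toReal_pos (h.2.2.2 y hy).ne' (measure_ne_top P _)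

include hV

lemma monotoneOn_Psip : MonotoneOn (Psip P V) (Iio M) := fun y _ y' hy' hyy' => by
  rw [Psip_eq_setAverage, Psip_eq_setAverage]
  exact setAverage_le_setAverage_of_subset (c := y') (fun ω hω => hyy'.trans_lt hω)
    (nullMeasurableSet_lt aemeasurable_const hV.aemeasurable)
    (nullMeasurableSet_lt aemeasurable_const hV.aemeasurable) (h.2.2.1 y' hy').ne'
    (measure_ne_top P _) hV.integrableOn (fun ω hω => le_of_lt hω) fun ω hω => not_lt.1 hω.2

lemma monotoneOn_Psim : MonotoneOn (Psim P V) (Ioi m) := fun y hy y' _ hyy' => by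
  rw [Psim_eq_setAverage, Psim_eq_setAverage, ← neg_le_neg_iff, ← average_neg, ← average_neg]
  exact setAverage_le_setAverage_of_subset (c := -y) (fun ω hω => le_trans hω hyy')
    (nullMeasurableSet_le hV.aemeasurable aemeasurable_const)
    (nullMeasurableSet_le hV.aemeasurable aemeasurable_const) (h.2.2.2 y hy).ne'
    (measure_ne_top P _) hV.neg.integrableOn (fun ω hω => neg_le_neg hω)
    fun ω hω => neg_le_neg (not_le.1 hω.2).le

lemma Psip_mem_Icc (hy : y < M) : Psip P V y ∈ Icc (⨍ ω, V ω ∂P) M := by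
  have hPy := (h.2.2.1 y hy).ne'
  rw [Psip_eq_setAverage]
  refine ⟨?_, (setAverage_mem_Icc hPy (measure_ne_top P _) hV.integrableOn h.2.1).2⟩
  simpa only [Measure.restrict_univ] using setAverage_le_setAverage_of_subset (c := y)
    (subset_univ {ω | V ω > y}) (nullMeasurableSet_lt aemeasurable_const hV.aemeasurable)
    nullMeasurableSet_univ hPy (measure_ne_top P _) hV.integrableOn (fun ω hω => le_of_lt hω)
    fun ω hω => not_lt.1 hω.2

lemma Psim_mem_Icc (hy : m < y) : Psim P V y ∈ Icc m (⨍ ω, V ω ∂P) := by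
  have hPy := (h.2.2.2 y hy).ne'
  rw [Psim_eq_setAverage]
  refine ⟨(setAverage_mem_Icc hPy (measure_ne_top P _) hV.integrableOn h.2.1).1, ?_⟩
  rw [← neg_le_neg_iff, ← average_neg, ← average_neg]
  simpa only [Measure.restrict_univ, Pi.neg_apply] using
    setAverage_le_setAverage_of_subset (c := -y) (subset_univ {ω | V ω ≤ y})
      (nullMeasurableSet_le hV.aemeasurable aemeasurable_const) nullMeasurableSet_univ hPy
      (measure_ne_top P _) hV.neg.integrableOn (fun ω hω => neg_le_neg hω)
      fun ω hω => neg_le_neg (not_le.1 hω.2).le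

lemma exists_add_le_Psip (hL : L < M) : ∃ ε > 0, ∀ y ≤ L, y + ε ≤ Psip P V y := by
  obtain ⟨L', hLL', hL'⟩ := exists_between hL
  have hpos := h.Pip_pos hL'
  have hpos_univ : 0 < P.real univ := hpos.trans_le (Pip_mem_Icc L').2
  refine ⟨(L' - L) * (Pip P V L' / P.real univ),
    mul_pos (sub_pos.2 hLL') (div_pos hpos hpos_univ), fun y hy => ?_⟩
  have hyL' : y < L' := hy.trans_lt hLL'
  have hposy := h.Pip_pos (hyL'.trans hL')
  calc y + (L' - L) * (Pip P V L' / P.real univ)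
      ≤ y + (L' - y) * (Pip P V L' / Pip P V y) := by
        gcongr
        exact (Pip_mem_Icc y).2
    _ ≤ Psip P V y := by
        rw [Psip_eq_setAverage]
        exact add_mul_div_le_setAverage (fun ω hω => hyL'.trans hω)
          (nullMeasurableSet_lt aemeasurable_const hV.aemeasurable)
          (nullMeasurableSet_lt aemeasurable_const hV.aemeasurable)
          (h.2.2.1 y (hyL'.trans hL')).ne' (measure_ne_top P _) hV.integrableOn
          (fun ω hω => le_of_lt hω) fun ω hω => by linarith [show V ω > L' from hω]

lemma exists_add_le_neg_Psim (hL : m < L) : ∃ ε > 0, ∀ y, L ≤ y → -y + ε ≤ -Psim P V y := by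
  obtain ⟨L', hL', hLL'⟩ := exists_between hL
  have hpos := h.Pim_pos hL'
  have hpos_univ : 0 < P.real univ := hpos.trans_le (Pim_mem_Icc L').2
  refine ⟨(L - L') * (Pim P V L' / P.real univ),
    mul_pos (sub_pos.2 hLL') (div_pos hpos hpos_univ), fun y hy => ?_⟩
  have hyL' : L' < y := hLL'.trans_le hy
  have hposy := h.Pim_pos (hL'.trans hyL')
  calc -y + (L - L') * (Pim P V L' / P.real univ)
      ≤ -y + (y - L') * (Pim P V L' / Pim P V y) := by
        gcongr
        exact (Pim_mem_Icc y).2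
    _ ≤ -Psim P V y := by
        rw [Psim_eq_setAverage, ← average_neg]
        exact add_mul_div_le_setAverage (fun ω hω => le_trans hω hyL'.le)
          (nullMeasurableSet_le hV.aemeasurable aemeasurable_const)
          (nullMeasurableSet_le hV.aemeasurable aemeasurable_const)
          (h.2.2.2 y (hL'.trans hyL')).ne' (measure_ne_top P _) hV.neg.integrableOn
          (fun ω hω => neg_le_neg hω) fun ω hω => by linarith [show V ω ≤ L' from hω]

end SuppIoo

end TruncatedMean
section KernelPrice

/-- The function `φ_g` of the paper with the Gaussian density replaced by an arbitrary `q`. -/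
noncomputable def kernelPrice {Ω : Type*} [MeasurableSpace Ω] (P : Measure Ω) (V : Ω → ℝ)
    (q g : ℝ → ℝ) (x : ℝ) : ℝ :=
  if 0 ≤ x then kernelMean q (fun z => Pip P V (g z)) (fun z => Psip P V (g z)) x
  else kernelMean q (fun z => Pim P V (g z)) (fun z => Psim P V (g z)) x

/-- Equation (E) with the Gaussian density replaced by `q` and `1 / N` by `α`. The averaged kernel
`q̄(x, z)` is written as the mean of `q (t * x - z)` over `t ∈ [0, 1]`, which also covers
`x = 0`. -/
def SolvesKernelE {Ω : Type*} [MeasurableSpace Ω] (P : Measure Ω) (V : Ω → ℝ) (q : ℝ → ℝ)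
    (α : ℝ) (F : ℝ → ℝ) : Prop :=
  ∀ x, F x =
    ∫ z, (α * q (x - z) + (1 - α) * ∫ t in (0 : ℝ)..1, q (t * x - z)) * kernelPrice P V q F z

lemma gqbar_eq_integral (σ x z : ℝ) : gqbar σ x z = ∫ t in (0 : ℝ)..1, gq σ (t * x - z) := by
  unfold gqbar
  split_ifs with hx
  · simp [hx, gq]
  · rw [intervalIntegral.integral_comp_mul_right (fun y => gq σ (y - z)) hx]
    simp

variable {Ω : Type*} [MeasurableSpace Ω] {P : Measure Ω} [IsFiniteMeasure P] {V : Ω → ℝ}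
  {m M b σ : ℝ} {q g F : ℝ → ℝ} {N : ℕ}

lemma phig_eq_kernelPrice : phig P V σ g = kernelPrice P V (gq σ) g := by
  funext x
  simp only [phig, phip, phim, kernelPrice, kernelMean, convolution_mul, Psip_mul_Pip,
    Psim_mul_Pim]

lemma SolvesE.solvesKernelE (hN : 1 ≤ N) (h : SolvesE P V σ N F) :
    SolvesKernelE P V (gq σ) (1 / N) F := fun x => by
  have hN' : ((N : ℝ) - 1) / N = 1 - 1 / N := by
    rw [sub_div, div_self (by positivity)]
  rw [h x]
  simp only [gqbar_eq_integral, phig_eq_kernelPrice, hN']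

lemma memLp_top_Pip_comp (hg : Monotone g) : MemLp (fun z => Pip P V (g z)) ∞ :=
  memLp_top_of_mem_Icc (antitone_Pip.comp_monotone hg).measurable.aestronglyMeasurable
    fun _ => Pip_mem_Icc _

lemma memLp_top_Pim_comp (hg : Monotone g) : MemLp (fun z => Pim P V (g z)) ∞ :=
  memLp_top_of_mem_Icc (monotone_Pim.comp hg).measurable.aestronglyMeasurable
    fun _ => Pim_mem_Icc _

section

variable (h : SuppIoo P V m M) (hV : Integrable V P) (hg : Monotone g) (hgI : ∀ x, g x ∈ Ioo m M)
include h hV hg hgI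

lemma SuppIoo.monotone_Psip_comp : Monotone fun z => Psip P V (g z) :=
  fun x y hxy => h.monotoneOn_Psip hV (hgI x).2 (hgI y).2 (hg hxy)

lemma SuppIoo.monotone_Psim_comp : Monotone fun z => Psim P V (g z) :=
  fun x y hxy => h.monotoneOn_Psim hV (hgI x).1 (hgI y).1 (hg hxy)

lemma SuppIoo.memLp_top_Psip_comp : MemLp (fun z => Psip P V (g z)) ∞ :=
  memLp_top_of_mem_Icc (h.monotone_Psip_comp hV hg hgI).measurable.aestronglyMeasurable
    fun z => h.Psip_mem_Icc hV (hgI z).2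

lemma SuppIoo.memLp_top_Psim_comp : MemLp (fun z => Psim P V (g z)) ∞ :=
  memLp_top_of_mem_Icc (h.monotone_Psim_comp hV hg hgI).measurable.aestronglyMeasurable
    fun z => h.Psim_mem_Icc hV (hgI z).1

variable (hq : IsLogConcaveDensity q)
include hq

lemma SuppIoo.kernelMean_Psip_mem_Icc (x : ℝ) :
    kernelMean q (fun z => Pip P V (g z)) (fun z => Psip P V (g z)) x ∈ Icc (⨍ ω, V ω ∂P) M :=
  kernelMean_mem_Icc hq.integrable hq.pos (memLp_top_Pip_comp hg) (fun z => h.Pip_pos (hgI z).2)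
    (h.monotone_Psip_comp hV hg hgI).measurable.aestronglyMeasurable
    (fun z => h.Psip_mem_Icc hV (hgI z).2) x

lemma SuppIoo.kernelMean_Psim_mem_Icc (x : ℝ) :
    kernelMean q (fun z => Pim P V (g z)) (fun z => Psim P V (g z)) x ∈ Icc m (⨍ ω, V ω ∂P) :=
  kernelMean_mem_Icc hq.integrable hq.pos (memLp_top_Pim_comp hg) (fun z => h.Pim_pos (hgI z).1)
    (h.monotone_Psim_comp hV hg hgI).measurable.aestronglyMeasurable
    (fun z => h.Psim_mem_Icc hV (hgI z).1) x

lemma SuppIoo.kernelPrice_mem_Icc (x : ℝ) : kernelPrice P V q g x ∈ Icc m M := by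
  have plus := h.kernelMean_Psip_mem_Icc hV hg hgI hq x
  have minus := h.kernelMean_Psim_mem_Icc hV hg hgI hq x
  rw [kernelPrice]
  split_ifs
  · exact ⟨(minus.1.trans minus.2).trans plus.1, plus.2⟩
  · exact ⟨minus.1, minus.2.trans (plus.1.trans plus.2)⟩

lemma SuppIoo.monotone_kernelPrice : Monotone (kernelPrice P V q g) := fun x y hxy => by
  rw [kernelPrice, kernelPrice]
  split_ifs with hx hy hy
  · exact monotone_kernelMean hq (memLp_top_Pip_comp hg) (fun z => h.Pip_pos (hgI z).2)
      (h.monotone_Psip_comp hV hg hgI) (h.memLp_top_Psip_comp hV hg hgI) hxy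
  · exact absurd (hx.trans hxy) hy
  · exact (h.kernelMean_Psim_mem_Icc hV hg hgI hq x).2.trans
      (h.kernelMean_Psip_mem_Icc hV hg hgI hq y).1
  · exact monotone_kernelMean hq (memLp_top_Pim_comp hg) (fun z => h.Pim_pos (hgI z).1)
      (h.monotone_Psim_comp hV hg hgI) (h.memLp_top_Psim_comp hV hg hgI) hxy

lemma SuppIoo.eq_right_of_tendsto_atTop (hgb : Tendsto g atTop (𝓝 b))
    (hb : Tendsto (kernelPrice P V q g) atTop (𝓝 b)) : b = M := by
  by_contra hne
  have hbM : b < M := (le_of_tendsto' hgb fun x => (hgI x).2.le).lt_of_ne hne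
  have hg_le (x : ℝ) : g x ≤ b := hg.ge_of_tendsto hgb x
  obtain ⟨p, hp⟩ : ∃ p, Tendsto (fun z => Pip P V (g z)) atTop (𝓝 p) :=
    ⟨_, tendsto_atTop_ciInf (antitone_Pip.comp_monotone hg)
      ⟨0, forall_mem_range.2 fun z => (Pip_mem_Icc _).1⟩⟩
  have hp0 : p ≠ 0 :=
    ((h.Pip_pos hbM).trans_le (ge_of_tendsto' hp fun x => antitone_Pip (hg_le x))).ne'
  obtain ⟨c, hc⟩ : ∃ c, Tendsto (fun z => Psip P V (g z)) atTop (𝓝 c) :=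
    ⟨_, tendsto_atTop_ciSup (h.monotone_Psip_comp hV hg hgI)
      ⟨M, forall_mem_range.2 fun z => (h.Psip_mem_Icc hV (hgI z).2).2⟩⟩
  have hcb : Tendsto (kernelPrice P V q g) atTop (𝓝 c) := by
    refine (tendsto_kernelMean (fun u => tendsto_atTop_add_const_right _ _ tendsto_id)
      hq.integrable (hq.integral_eq_one ▸ one_ne_zero) (memLp_top_Pip_comp hg)
      (h.memLp_top_Psip_comp hV hg hgI) hp0 hp hc).congr' ?_
    filter_upwards [eventually_ge_atTop 0] with x hx
    rw [kernelPrice, if_pos hx]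
  obtain ⟨ε, hε, hgap⟩ := h.exists_add_le_Psip hV hbM
  have : b + ε ≤ c := le_of_tendsto_of_tendsto' (hgb.add_const ε) hc fun x => hgap _ (hg_le x)
  linarith [tendsto_nhds_unique hb hcb]

lemma SuppIoo.eq_left_of_tendsto_atBot (hgb : Tendsto g atBot (𝓝 b))
    (hb : Tendsto (kernelPrice P V q g) atBot (𝓝 b)) : b = m := by
  by_contra hne
  have hmb : m < b := (ge_of_tendsto' hgb fun x => (hgI x).1.le).lt_of_ne' hne
  have le_hg (x : ℝ) : b ≤ g x := hg.le_of_tendsto hgb x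
  obtain ⟨p, hp⟩ : ∃ p, Tendsto (fun z => Pim P V (g z)) atBot (𝓝 p) :=
    ⟨_, tendsto_atBot_ciInf (monotone_Pim.comp hg)
      ⟨0, forall_mem_range.2 fun z => (Pim_mem_Icc _).1⟩⟩
  have hp0 : p ≠ 0 :=
    ((h.Pim_pos hmb).trans_le (ge_of_tendsto' hp fun x => monotone_Pim (le_hg x))).ne'
  obtain ⟨c, hc⟩ : ∃ c, Tendsto (fun z => Psim P V (g z)) atBot (𝓝 c) :=
    ⟨_, tendsto_atBot_ciInf (h.monotone_Psim_comp hV hg hgI)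
      ⟨m, forall_mem_range.2 fun z => (h.Psim_mem_Icc hV (hgI z).1).1⟩⟩
  have hcb : Tendsto (kernelPrice P V q g) atBot (𝓝 c) := by
    refine (tendsto_kernelMean (fun u => tendsto_atBot_add_const_right _ _ tendsto_id)
      hq.integrable (hq.integral_eq_one ▸ one_ne_zero) (memLp_top_Pim_comp hg)
      (h.memLp_top_Psim_comp hV hg hgI) hp0 hp hc).congr' ?_
    filter_upwards [eventually_lt_atBot 0] with x hx
    rw [kernelPrice, if_neg hx.not_ge]
  obtain ⟨ε, hε, hgap⟩ := h.exists_add_le_neg_Psim hV hmb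
  have : -b + ε ≤ -c :=
    le_of_tendsto_of_tendsto' (hgb.neg.add_const ε) hc.neg fun x => hgap _ (le_hg x)
  linarith [tendsto_nhds_unique hb hcb]

end

end KernelPrice

section Solution

variable {f q : ℝ → ℝ} {m M c α : ℝ} {l : Filter ℝ}

/-- The right-hand side of equation (E) after Fubini, as a function of the smoothed price
`h = φ_F ⋆ q`: the mixture, with weights `α` and `1 - α`, of `h x` and the mean of `h` over the
segment from `0` to `x`. -/
noncomputable def averageMix (α : ℝ) (h : ℝ → ℝ) (x : ℝ) : ℝ :=
  α * h x + (1 - α) * ∫ t in (0 : ℝ)..1, h (t * x)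

lemma strictMono_averageMix (hα : α ∈ Icc (0 : ℝ) 1) (hf : StrictMono f) :
    StrictMono (averageMix α f) := fun x y hxy => by
  have mean_lt := strictMono_integral_comp_mul hf hxy
  rcases hα.2.eq_or_lt with rfl | hα1
  · simpa only [averageMix, sub_self, zero_mul, one_mul, add_zero] using hf hxy
  · exact add_lt_add_of_le_of_lt (mul_le_mul_of_nonneg_left (hf hxy).le hα.1)
      (mul_lt_mul_of_pos_left mean_lt (sub_pos.2 hα1))

lemma tendsto_averageMix [l.IsCountablyGenerated]
    (hl : ∀ t : ℝ, 0 < t → Tendsto (fun x => t * x) l l) (hf : Measurable f)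
    (hfI : ∀ x, f x ∈ Icc m M) (hc : Tendsto f l (𝓝 c)) :
    Tendsto (averageMix α f) l (𝓝 c) := by
  have := (hc.const_mul α).add ((tendsto_integral_comp_mul hl hf hfI hc).const_mul (1 - α))
  rw [← add_mul, add_sub_cancel, one_mul] at this
  exact this

lemma tendsto_averageMix_convolution [l.IsCountablyGenerated]
    (hl_sub : ∀ u : ℝ, Tendsto (fun x => x - u) l l)
    (hl_mul : ∀ t : ℝ, 0 < t → Tendsto (fun x => t * x) l l) (hq : IsLogConcaveDensity q)
    (hf : Monotone f) (hfI : ∀ x, f x ∈ Icc m M) (hc : Tendsto f l (𝓝 c)) :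
    Tendsto (averageMix α (f ⋆[.mul ℝ ℝ] q)) l (𝓝 c) := by
  have hfb : MemLp f ∞ := memLp_top_of_mem_Icc hf.measurable.aestronglyMeasurable hfI
  have hq0 (z : ℝ) : 0 ≤ q z := (hq.pos z).le
  have conv := tendsto_convolution hl_sub hfb hq.integrable hc
  rw [hq.integral_eq_one, mul_one] at conv
  exact tendsto_averageMix hl_mul (monotone_convolution hf hfb hq.integrable hq0).measurable
    (convolution_mem_Icc hf.measurable.aestronglyMeasurable hfI hq0 hq.integral_eq_one) conv

lemma exists_ne_of_tendsto (hmM : m ≠ M) (hm : Tendsto f atBot (𝓝 m))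
    (hM : Tendsto f atTop (𝓝 M)) : ∃ x y, f x ≠ f y := by
  by_contra! hconst
  rw [show f = fun _ => f 0 from funext fun x => hconst x 0] at hm hM
  exact hmM ((tendsto_const_nhds_iff.1 hm).symm.trans (tendsto_const_nhds_iff.1 hM))

end Solution

theorem stmt11_general {Ω : Type*} [MeasurableSpace Ω] (P : Measure Ω) [IsFiniteMeasure P]
    (V : Ω → ℝ) (hV : Integrable V P) (m M : ℝ) (hsupp : SuppIoo P V m M)
    (q : ℝ → ℝ) (hq : IsLogConcaveDensity q) (α : ℝ) (hα : α ∈ Icc 0 1)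
    (F : ℝ → ℝ) (hFm : Monotone F) (hFr : ∀ x, F x ∈ Ioo m M)
    (hFsol : SolvesKernelE P V q α F) :
    Tendsto F atTop (𝓝 M) ∧ Tendsto F atBot (𝓝 m) ∧ StrictMono F := by
  set φ := kernelPrice P V q F
  have hφ : Monotone φ := hsupp.monotone_kernelPrice hV hFm hFr hq
  have hφI : ∀ x, φ x ∈ Icc m M := hsupp.kernelPrice_mem_Icc hV hFm hFr hq
  have hφb : MemLp φ ∞ := memLp_top_of_mem_Icc hφ.measurable.aestronglyMeasurable hφI
  have hF : F = averageMix α (φ ⋆[.mul ℝ ℝ] q) := funext fun x =>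
    (hFsol x).trans (integral_add_integral_comp_mul_sub_mul hφb hq.integrable α (1 - α) x)
  obtain ⟨b, hφ_top⟩ : ∃ b, Tendsto φ atTop (𝓝 b) :=
    ⟨_, tendsto_atTop_ciSup hφ ⟨M, forall_mem_range.2 fun x => (hφI x).2⟩⟩
  obtain ⟨a, hφ_bot⟩ : ∃ a, Tendsto φ atBot (𝓝 a) :=
    ⟨_, tendsto_atBot_ciInf hφ ⟨m, forall_mem_range.2 fun x => (hφI x).1⟩⟩
  have hF_top : Tendsto F atTop (𝓝 b) := hF ▸ tendsto_averageMix_convolution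
    (fun u => tendsto_atTop_add_const_right _ _ tendsto_id)
    (fun t ht => tendsto_id.const_mul_atTop ht) hq hφ hφI hφ_top
  have hF_bot : Tendsto F atBot (𝓝 a) := hF ▸ tendsto_averageMix_convolution
    (fun u => tendsto_atBot_add_const_right _ _ tendsto_id)
    (fun t ht => tendsto_id.const_mul_atBot ht) hq hφ hφI hφ_bot
  obtain rfl : b = M := hsupp.eq_right_of_tendsto_atTop hV hFm hFr hq hF_top hφ_top
  obtain rfl : a = m := hsupp.eq_left_of_tendsto_atBot hV hFm hFr hq hF_bot hφ_bot
  have hφ_ne : ∃ x y, φ x ≠ φ y := exists_ne_of_tendsto hsupp.1.ne hφ_bot hφ_top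
  exact ⟨hF_top, hF_bot,
    hF ▸ strictMono_averageMix hα (strictMono_convolution hφ hφb hφ_ne hq.integrable hq.pos)⟩

/-- Any continuous nondecreasing solution of (E) with values in `(m,M)` tends to `M`
at `+∞`, to `m` at `−∞`, and is strictly increasing. -/
theorem stmt11 {Ω : Type*} [MeasurableSpace Ω] (P : Measure Ω) [IsProbabilityMeasure P]
    (V : Ω → ℝ) (hVmeas : Measurable V) (hV : Integrable V P)
    (m M : ℝ) (hsupp : SuppIoo P V m M)
    (σ : ℝ) (hσ : 0 < σ) (N : ℕ) (hN : 1 ≤ N)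
    (F : ℝ → ℝ) (hFc : Continuous F) (hFm : Monotone F)
    (hFr : ∀ x, F x ∈ Set.Ioo m M)
    (hFsol : SolvesE P V σ N F) :
    Tendsto F atTop (nhds M) ∧ Tendsto F atBot (nhds m) ∧ StrictMono F := by
  exact stmt11_general P V hV m M hsupp (gq σ) (isLogConcaveDensity_gq hσ) (1 / N)
    ⟨by positivity, div_le_self zero_le_one (Nat.one_le_cast.2 hN)⟩ F hFm hFr
    (hFsol.solvesKernelE hN)
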